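/- arXiv:2508.18511 — 2 statements merged into one kernel-verified Lean document; each statement's English description precedes it below -/
import Mathlib

section
/- Let N>1 be an integer. Then c(N) equals the maximum of c(N,n) over all integers n with 0 ≤ n ≤ N−1 and gcd(N,n) > 1. In particular, c(N) = 0 if and only if c(N,n) = 0 for all such pairs (N,n). -/
namespace Paper

noncomputable section

/-- Closed disk attached to a rational `α = a/b` in lowest terms:
center `α`, radius `1/b`. -/
def disk (α : ℚ) : Set ℂ := Metric.closedBall (α : ℂ) (1 / (α.den : ℝ))

/-- The closed disk `D_{a/b}` of radius `1/b` centered at `a/b`. -/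
def diskAt (a b : ℕ) : Set ℂ := Metric.closedBall ((a : ℂ) / (b : ℂ)) (1 / (b : ℝ))

/-- The north pole `P_α = a/b + i/b` of the disk of `α = a/b` in lowest terms. -/
def northPole (α : ℚ) : ℂ := (α : ℂ) + Complex.I / (α.den : ℂ)

/-- Complexity of the north pole of `α` relative to a set `S` of rationals:
the number of `β ∈ S`, `β ≠ α`, whose disk contains `P_α`. -/
def poleComplexity (S : Set ℚ) (α : ℚ) : ℕ :=
  {β ∈ S | β ≠ α ∧ northPole α ∈ disk β}.ncard

/-- Rationals `a/b ∈ [0,1]` in lowest terms with `N ∣ b`. -/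
def cand (N : ℕ) : Set ℚ := {α | 0 ≤ α ∧ α ≤ 1 ∧ N ∣ α.den}

/-- The region `R_N`. -/
def RN (N : ℕ) : Set ℂ := ⋃ α ∈ cand N, disk α

/-- The set `S_N`: those `α` whose disk is not covered by the other disks. -/
def SSet (N : ℕ) : Set ℚ :=
  {α | α ∈ cand N ∧ ¬ disk α ⊆ ⋃ β ∈ cand N \ {α}, disk β}

/-- The complexity `c(N)`: the maximum of the complexities of north poles of `α ∈ S_N`. -/
def cN (N : ℕ) : ℕ := sSup (poleComplexity (SSet N) '' SSet N)

/-- The least integer `n' > n` with `gcd(N,n') > 1`. -/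
def nxt (N n : ℕ) : ℕ := sInf {m | n < m ∧ 1 < Nat.gcd N m}

/-- Rationals `a/b ∈ [n/N, n'/N]` in lowest terms with `N ∣ b`. -/
def candP (N n : ℕ) : Set ℚ :=
  {α | (n : ℚ) / (N : ℚ) ≤ α ∧ α ≤ (nxt N n : ℚ) / (N : ℚ) ∧ N ∣ α.den}

/-- The region `R_{N,n}` for a pair `(N,n)`. -/
def RP (N n : ℕ) : Set ℂ := ⋃ α ∈ candP N n, disk α

/-- The set `S_{N,n}` for a pair `(N,n)`. -/
def SP (N n : ℕ) : Set ℚ :=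
  {α | α ∈ candP N n ∧ ¬ disk α ⊆ ⋃ β ∈ candP N n \ {α}, disk β}

/-- The complexity `c(N,n)` for a pair `(N,n)`. -/
def cP (N n : ℕ) : ℕ := sSup (poleComplexity (SP N n) '' SP N n)

/-!
If `N ∣ b` and `α = a/b` differs from `p/N`, then `|α - p/N| ≥ 1/b`, so `D_α` crosses the vertical
line through `p/N` only if it is centered there, which lowest terms forbid when `gcd(N, p) > 1`.
These lines therefore cut the disks into the strips `[n/N, n'/N]`, and disks from different strips
meet at most in a real point `p/N`, which is also on the boundary of infinitely many disks of
either strip (those with centers `p/N ± 1/d`, `N² ∣ d`). Hence `S_{N,n}` is the part of `S_N` in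
the strip. A north pole `P_α` lies in `D_β` only if `|α - β| < 1/den β`, so only disks of its own
strip contain it.

A supremum in `ℕ` is a maximum only for bounded sets, so `S_N` must be shown to be finite.
Approximate `N α` by a fraction `r` with denominator at most `4N`. If `r` is an integer, the disk
at `r/N + 1/N²` or `r/N - 1/N²` contains `D_α` once `den α` is large; otherwise the disk at
`b/(N k)` does, where `b/k` is a Farey neighbour of `r` with `b` coprime to `N`. So
`den α < 16 N³` on `S_N`.
-/

theorem exists_isCoprime_add_mul {R : Type*} [CommRing R] [IsDomain R] [IsPrincipalIdealRing R]
    {b p N : R} (hN : N ≠ 0) (h : IsCoprime b p) : ∃ t, IsCoprime (b + t * p) N := by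
  induction N using UniqueFactorizationMonoid.induction_on_prime with
  | h₁ => exact absurd rfl hN
  | h₂ u hu => exact ⟨0, isCoprime_one_right.of_isCoprime_of_dvd_right hu.dvd⟩
  | h₃ M q hM hq ih =>
    obtain ⟨t, ht⟩ := ih hM
    by_cases hqb : q ∣ b + t * p
    · have hqp : ¬ q ∣ p := fun hqp =>
        hq.not_isUnit ((h.add_mul_right_left t).isUnit_of_dvd' hqb hqp)
      have hqM : ¬ q ∣ M := fun hqM => hq.not_isUnit (ht.isUnit_of_dvd' hqb hqM)
      have hshift : b + (t + M) * p = b + t * p + M * p := by ring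
      refine ⟨t + M, hshift ▸ IsCoprime.mul_right ?_ (ht.add_mul_left_left p)⟩
      refine ((hq.irreducible.coprime_iff_not_dvd).mpr ?_).symm
      rw [dvd_add_right hqb]
      exact hq.not_dvd_mul hqM hqp
    · exact ⟨t, ((hq.irreducible.coprime_iff_not_dvd).mpr hqb).symm.mul_right ht⟩

theorem exists_mul_sub_mul_eq_one_isCoprime {u v N : ℤ} (huv : IsCoprime u v) (hv : 1 < v)
    (hN : 0 < N) : ∃ b k : ℤ, 0 < k ∧ k ≤ N * v ∧ b * v - k * u = 1 ∧ IsCoprime b N := by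
  obtain ⟨x, y, hxy⟩ := huv
  obtain ⟨t, ht⟩ := exists_isCoprime_add_mul hN.ne' (⟨v, x, by linarith⟩ : IsCoprime y u)
  have hNv : 0 < N * v := mul_pos hN (by linarith)
  set k := (-x + t * v) % (N * v) with hk
  set q := (-x + t * v) / (N * v)
  have hkq : k = -x + t * v - N * v * q := by rw [hk, Int.emod_def]
  have hbk : (y + t * u + N * (-q * u)) * v - k * u = 1 := by
    rw [hkq]; linear_combination hxy
  have hk0 : k ≠ 0 := fun h0 => by
    rw [h0, zero_mul, sub_zero] at hbk
    have hunit : v ∣ 1 := ⟨_, hbk.symm.trans (mul_comm _ _)⟩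
    exact hv.not_ge (Int.le_of_dvd one_pos hunit)
  exact ⟨y + t * u + N * (-q * u), k, (Int.emod_nonneg _ hNv.ne').lt_of_ne' hk0,
    (Int.emod_lt_of_pos _ hNv).le, hbk, ht.add_mul_left_left _⟩

theorem den_intCast_div_natCast {b : ℤ} {m : ℕ} (hm : m ≠ 0) (h : IsCoprime b m) :
    ((b : ℚ) / m).den = m := by
  exact_mod_cast Rat.den_div_eq_of_coprime (b := m) (by positivity)
    (Int.isCoprime_iff_gcd_eq_one.mp h)

-- For every solution of `b * v - k * u = 1`, where `r = u / v`, the fraction `b / k` is a Farey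
-- neighbour of `r`; we need one that stays in lowest terms after division by `N`.
theorem exists_sub_div_eq_one_div_den_mul_den {N : ℕ} (hN : N ≠ 0) {r : ℚ} (hr : 1 < r.den) :
    ∃ β : ℚ, N ∣ β.den ∧ β.den ≤ N ^ 2 * r.den ∧ β - r / N = 1 / (r.den * β.den) := by
  obtain ⟨b, k, hk0, hkle, hbk, hbN⟩ := exists_mul_sub_mul_eq_one_isCoprime
    (Rat.isCoprime_num_den r) (by exact_mod_cast hr) (N := N) (by positivity)
  lift k to ℕ using hk0.le
  have hk : k ≠ 0 := by exact_mod_cast hk0.ne'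
  have hcop : IsCoprime b (N * k : ℕ) := by
    push_cast
    exact hbN.mul_right ⟨r.den, -r.num, by linarith⟩
  have hden := den_intCast_div_natCast (mul_ne_zero hN hk) hcop
  refine ⟨(b : ℚ) / (N * k : ℕ), (dvd_mul_right N k).trans hden.symm.dvd, ?_, ?_⟩
  · rw [hden, sq, mul_assoc]
    exact Nat.mul_le_mul_left N (by exact_mod_cast hkle)
  · have hbk' : (b : ℚ) * r.den - k * r.num = 1 := by exact_mod_cast hbk
    rw [hden]
    nth_rw 1 [← Rat.num_div_den r]
    push_cast
    field_simp
    linear_combination hbk'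

theorem den_div_add_one_div {N d : ℕ} (hd : d ≠ 0) (hNd : N ^ 2 ∣ d) (p : ℤ) :
    ((p : ℚ) / N + 1 / d).den = d := by
  obtain ⟨j, rfl⟩ := hNd
  have hN : N ≠ 0 := by rintro rfl; simp at hd
  have hj : j ≠ 0 := by rintro rfl; simp at hd
  have hcop : IsCoprime (p * (N * j) + 1 : ℤ) (N * j) := ⟨1, -p, by ring⟩
  have hcop' : IsCoprime (p * (N * j) + 1 : ℤ) (N ^ 2 * j : ℕ) := by
    push_cast
    rw [sq, mul_assoc]
    exact hcop.of_mul_right_left.mul_right hcop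
  have hfrac : (p : ℚ) / N + 1 / (N ^ 2 * j : ℕ) =
      ((p * (N * j) + 1 : ℤ) : ℚ) / (N ^ 2 * j : ℕ) := by
    push_cast
    field_simp
  rw [hfrac, den_intCast_div_natCast hd hcop']

theorem den_div_sub_one_div {N d : ℕ} (hd : d ≠ 0) (hNd : N ^ 2 ∣ d) (p : ℤ) :
    ((p : ℚ) / N - 1 / d).den = d := by
  rw [← Rat.den_neg_eq_den, show -((p : ℚ) / N - 1 / d) = ((-p : ℤ) : ℚ) / N + 1 / d by
    push_cast; ring, den_div_add_one_div hd hNd]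

theorem one_div_den_le_abs_sub {N : ℕ} {α : ℚ} (hα : N ∣ α.den) {p : ℤ} (hne : α ≠ p / N) :
    1 / (α.den : ℚ) ≤ |α - p / N| := by
  obtain ⟨m, hm⟩ := hα
  have hd : (0 : ℚ) < α.den := by positivity
  have hNm : (N : ℚ) * m ≠ 0 := by exact_mod_cast hm ▸ α.den_nz
  have hN : (N : ℚ) ≠ 0 := left_ne_zero_of_mul hNm
  have hdiff : α - p / N = ((α.num - p * m : ℤ) : ℚ) / α.den := by
    nth_rw 1 [← Rat.num_div_den α]
    have hm' : (m : ℚ) ≠ 0 := right_ne_zero_of_mul hNm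
    rw [hm]
    push_cast
    field_simp
  have hnum : α.num - p * m ≠ 0 := fun h0 => hne (sub_eq_zero.mp (by rw [hdiff, h0]; simp))
  rw [hdiff, abs_div, abs_of_pos hd, ← Int.cast_abs]
  gcongr
  exact_mod_cast Int.one_le_abs hnum

theorem add_one_div_den_le_of_lt_div {N : ℕ} {α : ℚ} (hα : N ∣ α.den) {p : ℤ} (h : α < p / N) :
    α + 1 / α.den ≤ p / N := by
  have hsep := one_div_den_le_abs_sub hα h.ne
  rw [abs_of_neg (sub_neg.mpr h)] at hsep
  linarith

theorem le_sub_one_div_den_of_div_lt {N : ℕ} {α : ℚ} (hα : N ∣ α.den) {p : ℤ} (h : p / N < α) :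
    p / N ≤ α - 1 / α.den := by
  have hsep := one_div_den_le_abs_sub hα h.ne'
  rw [abs_of_pos (sub_pos.mpr h)] at hsep
  linarith

theorem div_le_of_abs_sub_lt {N : ℕ} {α β : ℚ} (hβ : N ∣ β.den) (h : |α - β| < 1 / β.den) {p : ℤ}
    (hp : p / N ≤ α) : p / N ≤ β := by
  by_contra! hlt
  linarith [add_one_div_den_le_of_lt_div hβ hlt, le_abs_self (α - β)]

theorem le_div_of_abs_sub_lt {N : ℕ} {α β : ℚ} (hβ : N ∣ β.den) (h : |α - β| < 1 / β.den) {p : ℤ}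
    (hp : α ≤ p / N) : β ≤ p / N := by
  by_contra! hlt
  linarith [le_sub_one_div_den_of_div_lt hβ hlt, neg_abs_le (α - β)]

theorem den_div_dvd (p : ℤ) (N : ℕ) : ((p : ℚ) / N).den ∣ N := by
  exact_mod_cast Rat.den_dvd p N

theorem ne_div_of_one_lt_gcd {N p : ℕ} {α : ℚ} (hα : N ∣ α.den) (hp : 1 < Nat.gcd N p) :
    α ≠ p / N := by
  rintro rfl
  obtain ⟨m, hm⟩ := Nat.gcd_dvd_left N p
  obtain ⟨q, hq⟩ := Nat.gcd_dvd_right N p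
  generalize Nat.gcd N p = g at *
  subst hm hq
  have hreduce : ((g * q : ℕ) : ℚ) / (g * m : ℕ) = q / m := by
    push_cast
    exact mul_div_mul_left _ _ (by positivity)
  rw [hreduce] at hα
  have hm0 : 0 < m := Nat.pos_of_ne_zero fun h0 => by simp [h0] at hα
  have hle : g * m ≤ m := Nat.le_of_dvd hm0 (hα.trans (den_div_dvd q m))
  exact hle.not_gt (lt_mul_of_one_lt_left hm0 hp)

theorem norm_ratCast_sub_ratCast (α β : ℚ) : ‖(α : ℂ) - β‖ = (|α - β| : ℚ) := by
  rw [← Rat.cast_sub, Complex.norm_ratCast, Rat.cast_abs]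

theorem ratCast_mem_disk {α β : ℚ} : (α : ℂ) ∈ disk β ↔ |α - β| ≤ 1 / β.den := by
  rw [disk, mem_closedBall_iff_norm, norm_ratCast_sub_ratCast, ← Rat.cast_le (K := ℝ)]
  push_cast
  rfl

theorem disk_subset_disk {α β : ℚ} (h : |α - β| ≤ 1 / β.den - 1 / α.den) : disk α ⊆ disk β := by
  apply Metric.closedBall_subset_closedBall'
  rw [dist_eq_norm, norm_ratCast_sub_ratCast, ← le_sub_iff_add_le']
  simpa using (Rat.cast_le (K := ℝ)).mpr h

theorem abs_re_sub_le_of_mem_disk {α : ℚ} {z : ℂ} (hz : z ∈ disk α) :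
    |z.re - α| ≤ 1 / α.den := by
  rw [← Complex.ratCast_re, ← Complex.sub_re]
  exact (Complex.abs_re_le_norm _).trans (mem_closedBall_iff_norm.mp hz)

theorem abs_sub_lt_of_northPole_mem_disk {α β : ℚ} (h : northPole α ∈ disk β) :
    |α - β| < 1 / β.den := by
  have hre : (northPole α - β).re = (α - β : ℚ) := by simp [northPole, Complex.div_natCast_re]
  have him : (northPole α - β).im ≠ 0 := by simp [northPole, Complex.div_natCast_im]
  have hlt := (Complex.abs_re_lt_norm.mpr him).trans_le (mem_closedBall_iff_norm.mp h)
  rw [hre, ← Rat.cast_abs] at hlt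
  rw [← Rat.cast_lt (K := ℝ)]
  simpa using hlt

theorem eq_ratCast_of_mem_disk_of_mem_disk {α β c : ℚ} (hα : α + 1 / α.den ≤ c)
    (hβ : c ≤ β - 1 / β.den) {z : ℂ} (hzα : z ∈ disk α) (hzβ : z ∈ disk β) : z = c := by
  have hα' : (α : ℝ) + 1 / α.den ≤ c := by simpa using (Rat.cast_le (K := ℝ)).mpr hα
  have hβ' : (c : ℝ) ≤ β - 1 / β.den := by simpa using (Rat.cast_le (K := ℝ)).mpr hβ
  have hzα' := (abs_le.mp (abs_re_sub_le_of_mem_disk hzα)).2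
  have hzβ' := (abs_le.mp (abs_re_sub_le_of_mem_disk hzβ)).1
  have hre : z.re = c := by linarith
  have hnorm : ‖z - β‖ ≤ |(z - β).re| := by
    refine (mem_closedBall_iff_norm.mp hzβ).trans (le_trans ?_ (neg_le_abs _))
    rw [Complex.sub_re, Complex.ratCast_re]
    linarith
  have him : (z - β).im = 0 :=
    Complex.abs_re_eq_norm.mp ((Complex.abs_re_le_norm _).antisymm hnorm)
  exact Complex.ext (by simpa using hre) (by simpa using him)

theorem mem_cand_of_abs_sub_lt {N : ℕ} {α β : ℚ} (hα : α ∈ cand N) (hβ : N ∣ β.den)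
    (h : |α - β| < 1 / β.den) : β ∈ cand N := by
  have hN : (N : ℚ) ≠ 0 := by exact_mod_cast ne_zero_of_dvd_ne_zero β.den_nz hβ
  refine ⟨?_, ?_, hβ⟩
  · simpa using div_le_of_abs_sub_lt hβ h (p := 0) (by simpa using hα.1)
  · simpa [hN] using le_div_of_abs_sub_lt hβ h (p := N) (by simpa [hN] using hα.2.1)

theorem mem_candP_of_abs_sub_lt {N n : ℕ} {α β : ℚ} (hα : α ∈ candP N n) (hβ : N ∣ β.den)
    (h : |α - β| < 1 / β.den) : β ∈ candP N n := by
  refine ⟨?_, ?_, hβ⟩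
  · simpa using div_le_of_abs_sub_lt hβ h (p := n) (by simpa using hα.1)
  · simpa using le_div_of_abs_sub_lt hβ h (p := nxt N n) (by simpa using hα.2.1)

theorem notMem_SSet_of_abs_sub_le {N : ℕ} {α β : ℚ} (hβ : N ∣ β.den) (hne : β ≠ α)
    (h : |α - β| ≤ 1 / β.den - 1 / α.den) : α ∉ SSet N := by
  rintro ⟨hα, hS⟩
  have hpos : (0 : ℚ) < 1 / α.den := by positivity
  have hβN : β ∈ cand N := mem_cand_of_abs_sub_lt hα hβ (by linarith)
  exact hS ((disk_subset_disk h).trans (Set.subset_biUnion_of_mem (u := disk) ⟨hβN, hne⟩))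

theorem notMem_SSet_of_near_div {N : ℕ} {α : ℚ} (hden : N ^ 2 < α.den) {p : ℤ}
    (hp : |α - p / N| ≤ 1 / N ^ 2) : α ∉ SSet N := by
  intro hα
  have hN : N ≠ 0 := ne_zero_of_dvd_ne_zero α.den_nz hα.1.2.2
  have hN2 : N ^ 2 ≠ 0 := pow_ne_zero 2 hN
  have hne : α ≠ p / N := by
    rintro rfl
    have hle : (p / N : ℚ).den ≤ N := Nat.le_of_dvd (Nat.pos_of_ne_zero hN) (den_div_dvd p N)
    exact hden.not_ge (hle.trans (Nat.le_self_pow two_ne_zero N))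
  have hdeninv : 1 / (α.den : ℚ) ≤ 1 / (N ^ 2 : ℕ) :=
    one_div_le_one_div_of_le (by positivity) (by exact_mod_cast hden.le)
  rw [← Nat.cast_pow, abs_le] at hp
  rcases lt_or_gt_of_ne hne with hlt | hgt
  · have hβ := den_div_sub_one_div hN2 dvd_rfl p
    have hsep := add_one_div_den_le_of_lt_div hα.1.2.2 hlt
    refine notMem_SSet_of_abs_sub_le (β := p / N - 1 / (N ^ 2 : ℕ)) ?_ ?_ ?_ hα
    · exact (dvd_pow_self N two_ne_zero).trans hβ.symm.dvd
    · exact fun h => hden.ne (hβ ▸ congrArg Rat.den h)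
    · rw [hβ, abs_le]
      constructor <;> linarith
  · have hβ := den_div_add_one_div hN2 dvd_rfl p
    have hsep := le_sub_one_div_den_of_div_lt hα.1.2.2 hgt
    refine notMem_SSet_of_abs_sub_le (β := p / N + 1 / (N ^ 2 : ℕ)) ?_ ?_ ?_ hα
    · exact (dvd_pow_self N two_ne_zero).trans hβ.symm.dvd
    · exact fun h => hden.ne (hβ ▸ congrArg Rat.den h)
    · rw [hβ, abs_le]
      constructor <;> linarith

theorem notMem_SSet_of_near_nonintegral {N : ℕ} {α r : ℚ} (hr : 1 < r.den)
    (hden : 4 * (N ^ 2 * r.den) ≤ α.den) (h : |α - r / N| ≤ 1 / (4 * (N ^ 2 * r.den))) :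
    α ∉ SSet N := by
  intro hα
  have hN : N ≠ 0 := ne_zero_of_dvd_ne_zero α.den_nz hα.1.2.2
  obtain ⟨β, hβ, hβle, hβr⟩ := exists_sub_div_eq_one_div_den_mul_den hN hr
  have hβle' : (β.den : ℚ) ≤ N ^ 2 * r.den := by exact_mod_cast hβle
  refine notMem_SSet_of_abs_sub_le hβ ?_ ?_ hα
  · rintro rfl
    have hpos := β.den_pos
    omega
  have hαr : |α - r / N| ≤ 1 / (4 * β.den) := h.trans (by gcongr)
  have hrβ : |r / N - β| ≤ 1 / (2 * β.den) := by
    rw [abs_sub_comm, hβr, abs_of_nonneg (by positivity)]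
    gcongr
    exact_mod_cast hr
  have hαβ : 1 / (α.den : ℚ) ≤ 1 / (4 * β.den) :=
    one_div_le_one_div_of_le (by positivity)
      (by exact_mod_cast (Nat.mul_le_mul_left 4 hβle).trans hden)
  calc |α - β| ≤ |α - r / N| + |r / N - β| := abs_sub_le _ _ _
    _ ≤ 1 / (4 * β.den) + 1 / (2 * β.den) := add_le_add hαr hrβ
    _ = 1 / β.den - 1 / (4 * β.den) := by field_simp; norm_num
    _ ≤ 1 / β.den - 1 / α.den := sub_le_sub_left hαβ _

theorem exists_rat_abs_sub_div_le {N : ℕ} (hN : N ≠ 0) (x : ℚ) :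
    ∃ r : ℚ, r.den ≤ 4 * N ∧ |x - r / N| ≤ 1 / (4 * (N ^ 2 * r.den)) := by
  obtain ⟨r, hr, hrN⟩ := Real.exists_rat_abs_sub_le_and_den_le ((N * x : ℚ) : ℝ)
    (n := 4 * N) (by positivity)
  have hNpos : (0 : ℚ) < N := by positivity
  have hr' : |N * x - r| ≤ 1 / ((4 * N + 1) * r.den) := by
    rw [← Rat.cast_le (K := ℝ)]
    simpa using hr
  refine ⟨r, hrN, ?_⟩
  calc |x - r / N| = |N * x - r| / N := by
        rw [← abs_of_pos hNpos, ← abs_div, abs_of_pos hNpos]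
        congr 1
        field_simp
    _ ≤ 1 / (4 * N * r.den) / N := by
        gcongr
        refine hr'.trans (one_div_le_one_div_of_le (by positivity) ?_)
        gcongr
        linarith
    _ = 1 / (4 * (N ^ 2 * r.den)) := by field_simp

theorem den_lt_of_mem_SSet {N : ℕ} {α : ℚ} (hα : α ∈ SSet N) : α.den < 16 * N ^ 3 := by
  by_contra! hden
  have hN : N ≠ 0 := ne_zero_of_dvd_ne_zero α.den_nz hα.1.2.2
  obtain ⟨r, hrN, hr⟩ := exists_rat_abs_sub_div_le hN α
  rcases (Nat.one_le_iff_ne_zero.mpr r.den_nz).eq_or_lt with hr1 | hr1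
  · have hrnum : (r.num : ℚ) = r := Rat.coe_int_num_of_den_eq_one hr1.symm
    rw [← hr1, ← hrnum] at hr
    refine notMem_SSet_of_near_div (p := r.num) ?_ ?_ hα
    · calc N ^ 2 ≤ N ^ 3 := Nat.pow_le_pow_right (Nat.pos_of_ne_zero hN) (by norm_num)
        _ < 16 * N ^ 3 := lt_mul_of_one_lt_left (by positivity) (by norm_num)
        _ ≤ α.den := hden
    · refine hr.trans (one_div_le_one_div_of_le (by positivity) ?_)
      push_cast
      linarith [sq_nonneg (N : ℚ)]
  · refine notMem_SSet_of_near_nonintegral hr1 (le_trans ?_ hden) hr hα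
    calc 4 * (N ^ 2 * r.den) ≤ 4 * (N ^ 2 * (4 * N)) := by gcongr
      _ = 16 * N ^ 3 := by ring

theorem finite_Icc_zero_one_inter_den_le (B : ℕ) :
    (Set.Icc (0 : ℚ) 1 ∩ {α | α.den ≤ B}).Finite := by
  refine ((Set.finite_Icc (0 : ℤ) B).image2 (fun (a : ℤ) (b : ℕ) => (a : ℚ) / b)
    (Set.finite_Iic B)).subset ?_
  rintro α ⟨⟨h0, h1⟩, hB⟩
  have hnum : α.num ≤ α.den := by simpa using Rat.num_le_denom_iff.mpr h1
  exact ⟨α.num, ⟨Rat.num_nonneg.mpr h0, hnum.trans (by exact_mod_cast hB)⟩, α.den, hB,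
    Rat.num_div_den α⟩

theorem finite_SSet (N : ℕ) : (SSet N).Finite :=
  (finite_Icc_zero_one_inter_den_le (16 * N ^ 3)).subset fun _ hα =>
    ⟨⟨hα.1.1, hα.1.2.1⟩, (den_lt_of_mem_SSet hα).le⟩

section Strips

variable {N n : ℕ}

theorem nxt_spec (hN : 1 < N) (hn : n < N) : n < nxt N n ∧ 1 < Nat.gcd N (nxt N n) :=
  Nat.sInf_mem (s := {m | n < m ∧ 1 < Nat.gcd N m}) ⟨N, hn, by simpa using hN⟩

theorem nxt_le (hN : 1 < N) (hn : n < N) : nxt N n ≤ N :=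
  Nat.sInf_le ⟨hn, by simpa using hN⟩

theorem candP_subset_cand (hN : 1 < N) (hn : n < N) : candP N n ⊆ cand N := by
  rintro α ⟨hleft, hright, hden⟩
  refine ⟨le_trans (by positivity) hleft, hright.trans ?_, hden⟩
  exact div_le_one_of_le₀ (by exact_mod_cast nxt_le hN hn) (Nat.cast_nonneg N)

theorem exists_mem_candP (hN : 1 < N) {α : ℚ} (hα : α ∈ cand N) :
    ∃ n < N, 1 < Nat.gcd N n ∧ α ∈ candP N n := by
  classical
  obtain ⟨hα0, hα1, hden⟩ := hα
  let P (n : ℕ) : Prop := 1 < Nat.gcd N n ∧ (n : ℚ) / N ≤ α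
  have hP0 : P 0 := ⟨by simpa using hN, by simpa using hα0⟩
  obtain ⟨hgcd, hleft⟩ : P (Nat.findGreatest P N) := Nat.findGreatest_spec (Nat.zero_le N) hP0
  have hmax (m : ℕ) (hm : Nat.findGreatest P N < m) (hmN : m ≤ N) : ¬ P m :=
    Nat.findGreatest_is_greatest hm hmN
  have hle := Nat.findGreatest_le (P := P) N
  generalize Nat.findGreatest P N = n at *
  have hne : n ≠ N := by
    rintro rfl
    have hone : (n : ℚ) / n = 1 := div_self (by positivity)
    exact ne_div_of_one_lt_gcd hden hgcd (le_antisymm (hone ▸ hα1) hleft)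
  have hn : n < N := lt_of_le_of_ne hle hne
  obtain ⟨hlt, hgcd'⟩ := nxt_spec hN hn
  refine ⟨n, hn, hgcd, hleft, ?_, hden⟩
  by_contra! hright
  exact hmax _ hlt (nxt_le hN hn) ⟨hgcd', hright.le⟩

theorem div_add_one_div_le_nxt_div (hN : 1 < N) (hn : n < N) {d : ℕ} (hd : d ≠ 0)
    (hNd : N ^ 2 ∣ d) : (n : ℚ) / N + 1 / d ≤ nxt N n / N := by
  have hdN : N ≤ d := Nat.le_of_dvd (Nat.pos_of_ne_zero hd) ((dvd_pow_self N two_ne_zero).trans hNd)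
  calc (n : ℚ) / N + 1 / d ≤ n / N + 1 / N := by gcongr
    _ = (n + 1) / N := (add_div _ _ _).symm
    _ ≤ nxt N n / N := by
      gcongr
      exact_mod_cast (nxt_spec hN hn).1

theorem exists_mem_candP_endpoint_mem_disk (hN : 1 < N) (hn : n < N) (α : ℚ) {c : ℚ}
    (hc : c = n / N ∨ c = nxt N n / N) : ∃ γ ∈ candP N n \ {α}, (c : ℂ) ∈ disk γ := by
  obtain ⟨d, hNd, hαd⟩ : ∃ d, N ^ 2 ∣ d ∧ α.den < d :=
    ⟨N ^ 2 * (α.den + 1), dvd_mul_right _ _,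
      Nat.lt_of_succ_le (Nat.le_mul_of_pos_left _ (by positivity))⟩
  have hd : d ≠ 0 := by omega
  have hN_dvd : N ∣ d := (dvd_pow_self N two_ne_zero).trans hNd
  have hpos : (0 : ℚ) < 1 / d := by positivity
  have hgap := div_add_one_div_le_nxt_div hN hn hd hNd
  rcases hc with rfl | rfl
  · have hden : ((n : ℚ) / N + 1 / d).den = d := den_div_add_one_div hd hNd n
    refine ⟨_, ⟨⟨by linarith, hgap, hN_dvd.trans hden.symm.dvd⟩, ?_⟩, ratCast_mem_disk.mpr ?_⟩
    · exact fun h => hαd.ne' (hden ▸ congrArg Rat.den h)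
    · rw [hden, sub_add_cancel_left, abs_neg, abs_of_pos hpos]
  · have hden : ((nxt N n : ℚ) / N - 1 / d).den = d := den_div_sub_one_div hd hNd (nxt N n)
    refine ⟨_, ⟨⟨by linarith, by linarith, hN_dvd.trans hden.symm.dvd⟩, ?_⟩,
      ratCast_mem_disk.mpr ?_⟩
    · exact fun h => hαd.ne' (hden ▸ congrArg Rat.den h)
    · rw [hden, sub_sub_cancel, abs_of_pos hpos]

theorem eq_endpoint_of_mem_disk_of_notMem_candP (hN : 1 < N) (hn : n < N) (hg : 1 < Nat.gcd N n)
    {α β : ℚ} (hα : α ∈ candP N n) (hβ : N ∣ β.den) (hβn : β ∉ candP N n) {z : ℂ}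
    (hzα : z ∈ disk α) (hzβ : z ∈ disk β) :
    ∃ c : ℚ, (c = n / N ∨ c = nxt N n / N) ∧ z = c := by
  obtain ⟨hleft, hright, hden⟩ := hα
  have hleft' := lt_of_le_of_ne hleft (ne_div_of_one_lt_gcd hden hg).symm
  have hright' := lt_of_le_of_ne hright (ne_div_of_one_lt_gcd hden (nxt_spec hN hn).2)
  by_cases hβleft : n / N ≤ β
  · have hβright : nxt N n / N < β := not_le.mp fun h => hβn ⟨hβleft, h, hβ⟩
    exact ⟨_, .inr rfl, eq_ratCast_of_mem_disk_of_mem_disk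
      (add_one_div_den_le_of_lt_div (p := nxt N n) hden hright')
      (le_sub_one_div_den_of_div_lt (p := nxt N n) hβ hβright) hzα hzβ⟩
  · exact ⟨_, .inl rfl, eq_ratCast_of_mem_disk_of_mem_disk
      (add_one_div_den_le_of_lt_div (p := n) hβ (not_le.mp hβleft))
      (le_sub_one_div_den_of_div_lt (p := n) hden hleft') hzβ hzα⟩

theorem disk_subset_biUnion_candP_iff (hN : 1 < N) (hn : n < N) (hg : 1 < Nat.gcd N n) {α : ℚ}
    (hα : α ∈ candP N n) :
    disk α ⊆ ⋃ β ∈ candP N n \ {α}, disk β ↔ disk α ⊆ ⋃ β ∈ cand N \ {α}, disk β := by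
  refine ⟨fun h => h.trans (Set.biUnion_subset_biUnion_left
    (Set.sdiff_subset_sdiff_left (candP_subset_cand hN hn))), fun h z hz => ?_⟩
  obtain ⟨β, ⟨hβ, hβα⟩, hzβ⟩ := Set.mem_iUnion₂.mp (h hz)
  by_cases hβn : β ∈ candP N n
  · exact Set.mem_biUnion (x := β) ⟨hβn, hβα⟩ hzβ
  · obtain ⟨c, hc, rfl⟩ := eq_endpoint_of_mem_disk_of_notMem_candP hN hn hg hα hβ.2.2 hβn hz hzβ
    obtain ⟨γ, hγ, hcγ⟩ := exists_mem_candP_endpoint_mem_disk hN hn α hc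
    exact Set.mem_biUnion hγ hcγ

theorem mem_SP_iff (hN : 1 < N) (hn : n < N) (hg : 1 < Nat.gcd N n) {α : ℚ} :
    α ∈ SP N n ↔ α ∈ SSet N ∧ α ∈ candP N n := by
  constructor
  · rintro ⟨hα, hS⟩
    exact ⟨⟨candP_subset_cand hN hn hα, mt (disk_subset_biUnion_candP_iff hN hn hg hα).mpr hS⟩, hα⟩
  · rintro ⟨⟨-, hS⟩, hα⟩
    exact ⟨hα, mt (disk_subset_biUnion_candP_iff hN hn hg hα).mp hS⟩

theorem poleComplexity_SP (hN : 1 < N) (hn : n < N) (hg : 1 < Nat.gcd N n) {α : ℚ}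
    (hα : α ∈ candP N n) : poleComplexity (SP N n) α = poleComplexity (SSet N) α := by
  unfold poleComplexity
  congr 1
  ext β
  refine and_congr_left fun ⟨_, hpole⟩ => ?_
  rw [mem_SP_iff hN hn hg]
  exact and_iff_left_of_imp fun hβ =>
    mem_candP_of_abs_sub_lt hα hβ.1.2.2 (abs_sub_lt_of_northPole_mem_disk hpole)

theorem cN_le_iff {B : ℕ} : cN N ≤ B ↔ ∀ α ∈ SSet N, poleComplexity (SSet N) α ≤ B := by
  rw [cN, csSup_le_iff' ((finite_SSet N).image _).bddAbove, Set.forall_mem_image]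

theorem cP_le_iff (hN : 1 < N) (hn : n < N) (hg : 1 < Nat.gcd N n) {B : ℕ} :
    cP N n ≤ B ↔ ∀ α ∈ SSet N, α ∈ candP N n → poleComplexity (SSet N) α ≤ B := by
  have hfin : (SP N n).Finite :=
    (finite_SSet N).subset fun _ hα => ((mem_SP_iff hN hn hg).mp hα).1
  rw [cP, csSup_le_iff' (hfin.image _).bddAbove, Set.forall_mem_image]
  refine forall_congr' fun α => ?_
  rw [mem_SP_iff hN hn hg, and_imp]
  exact forall₂_congr fun _ hα => by rw [poleComplexity_SP hN hn hg hα]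

theorem cN_le_iff_forall_cP_le (hN : 1 < N) {B : ℕ} :
    cN N ≤ B ↔ ∀ n < N, 1 < Nat.gcd N n → cP N n ≤ B := by
  rw [cN_le_iff]
  constructor
  · exact fun h n hn hg => (cP_le_iff hN hn hg).mpr fun α hα _ => h α hα
  · intro h α hα
    obtain ⟨n, hn, hg, hαn⟩ := exists_mem_candP hN hα.1
    exact (cP_le_iff hN hn hg).mp (h n hn hg) α hα hαn

end Strips

/-- `c(N)` is the maximum of `c(N,n)` over all pairs `(N,n)`; in particular
`c(N) = 0` iff `c(N,n) = 0` for all pairs `(N,n)`. -/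
theorem cN_eq_max_cP (N : ℕ) (hN : 1 < N) :
    cN N = sSup (cP N '' {n | n ≤ N - 1 ∧ 1 < Nat.gcd N n}) ∧
    (cN N = 0 ↔ ∀ n, n ≤ N - 1 → 1 < Nat.gcd N n → cP N n = 0) := by
  have hle_iff (B : ℕ) : cN N ≤ B ↔ ∀ n, n ≤ N - 1 → 1 < Nat.gcd N n → cP N n ≤ B := by
    simp only [cN_le_iff_forall_cP_le hN, Nat.le_sub_one_iff_lt (zero_lt_one.trans hN)]
  have hfin : {n | n ≤ N - 1 ∧ 1 < Nat.gcd N n}.Finite :=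
    (Set.finite_Iic (N - 1)).subset fun _ hn => hn.1
  constructor
  · refine eq_of_forall_ge_iff fun B => ?_
    rw [hle_iff, csSup_le_iff' (hfin.image _).bddAbove, Set.forall_mem_image]
    simp only [Set.mem_ofPred_eq, and_imp]
  · simpa only [Nat.le_zero] using hle_iff 0

end

end Paper
end

section
/- Let (N,n) be a pair of integers with N>1, 0 ≤ n ≤ N−1, and gcd(N,n) > 1. Suppose that (a) each of n, n+1, 2n+1, 3n+1, 4n+1 has a common factor greater than 1 with N; and (b) gcd(N, 3n+2) = gcd(N, 5n+2) = 1. Then c(N,n) ≥ 1. -/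
/-!
Substituting `α = (n + x) / N` maps `S_{N,n}` to the set of `x = k/m ∈ [0, 1]` with `n m + k`
coprime to `N` whose disks `D_x` are not covered by the others. That set is finite: for `x` outside
`(0, 1/N) ∪ (1 - 1/N, 1)`, Dirichlet's theorem gives `p/q` with `q > 1` very close to `x`, and among
the solutions of `p d - q l = 1` one of bounded size has `n d + l` coprime to `N`. Then
`|d x - l| ≈ 1/q` is bounded away from `1`, so `D_{l/d}` swallows every small disk around `x`; the
two excluded intervals are taken care of by `1/N` and `1 - 1/N`.

The gcd conditions remove `0, 1, 1/2, 1/3, 1/4` and keep `2/3, 2/5`. Few small denominators are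
left, so each of `D_{2/3}` and `D_{2/5}` contains a point outside every other disk, while the north
pole of `2/5` lies in `D_{2/3}`.
-/

namespace Paper

noncomputable section

/-- Rationals `a/b ∈ [n/N, (n+1)/N]` in lowest terms with `N ∣ b`. -/
def candB (N n : ℕ) : Set ℚ :=
  {α | (n : ℚ) / (N : ℚ) ≤ α ∧ α ≤ ((n : ℚ) + 1) / (N : ℚ) ∧ N ∣ α.den}

/-- The region `R_{N,n}` for a bad pair `(N,n)`. -/
def RB (N n : ℕ) : Set ℂ := ⋃ α ∈ candB N n, disk α

/-- The set `S_{N,n}` for a bad pair `(N,n)`. -/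
def SB (N n : ℕ) : Set ℚ :=
  {α | α ∈ candB N n ∧ ¬ disk α ⊆ ⋃ β ∈ candB N n \ {α}, disk β}

/-- The complexity `c(N,n)` for a bad pair `(N,n)`. -/
def cB (N n : ℕ) : ℕ := sSup (poleComplexity (SB N n) '' SB N n)


section Disk

variable {x y : ℚ} {z : ℂ}

theorem mem_disk_iff :
    z ∈ disk x ↔ (x.den * z.re - x.num) ^ 2 + (x.den * z.im) ^ 2 ≤ 1 := by
  have hd : (0 : ℝ) < x.den := by exact_mod_cast x.pos
  have hx : (x.den : ℝ) * x = x.num := by exact_mod_cast Rat.den_mul_eq_num x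
  rw [disk, Metric.mem_closedBall, Complex.dist_eq, le_div_iff₀' hd,
    ← sq_le_one_iff₀ (by positivity), mul_pow, Complex.sq_norm, Complex.normSq_apply, ← hx]
  simp only [Complex.sub_re, Complex.sub_im, Complex.ratCast_re, Complex.ratCast_im]
  ring_nf

theorem disk_subset_disk_s16 (h : |x - y| + 1 / x.den ≤ 1 / (y.den : ℚ)) : disk x ⊆ disk y := by
  refine Metric.closedBall_subset_closedBall' ?_
  have hdist : dist (x : ℂ) y = |(x : ℝ) - y| := by
    rw [← Complex.ofReal_ratCast, ← Complex.ofReal_ratCast, Complex.dist_of_im_eq (by simp),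
      Real.dist_eq, Complex.ofReal_re, Complex.ofReal_re]
  have h' : ((|x - y| + 1 / x.den : ℚ) : ℝ) ≤ (1 / y.den : ℚ) := Rat.cast_le.mpr h
  rw [hdist, add_comm]
  push_cast at h'
  exact h'

theorem northPole_mem_disk : northPole x ∈ disk x := by
  simp [northPole, disk]

end Disk

section Essential

/-- The elements of `T` whose disk is not covered by the disks of the other elements, so that
`SB N n` is `essential (candB N n)`. -/
def essential (T : Set ℚ) : Set ℚ := {x ∈ T | ¬ disk x ⊆ ⋃ y ∈ T \ {x}, disk y}

variable {T : Set ℚ} {x y : ℚ}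

theorem mem_essential_iff :
    x ∈ essential T ↔ x ∈ T ∧ ∃ z ∈ disk x, ∀ y ∈ T, y ≠ x → z ∉ disk y := by
  simp [essential, Set.not_subset]

theorem notMem_essential_of_disk_subset (hy : y ∈ T) (hne : y ≠ x) (h : disk x ⊆ disk y) :
    x ∉ essential T := fun hx =>
  hx.2 (h.trans (Set.subset_biUnion_of_mem (u := disk) ⟨hy, hne⟩))

theorem essential_image {f : ℚ → ℚ} {φ : ℂ → ℂ} (hf : f.Injective) (hφ : φ.Surjective)
    (h : ∀ x ∈ T, ∀ z, φ z ∈ disk (f x) ↔ z ∈ disk x) :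
    essential (f '' T) = f '' essential T := by
  have mem_iff (x : ℚ) (hx : x ∈ T) : f x ∈ essential (f '' T) ↔ x ∈ essential T := by
    rw [mem_essential_iff, mem_essential_iff, hφ.exists]
    simp only [Set.mem_image_of_mem f hx, hx, true_and, Set.forall_mem_image, hf.ne_iff, h x hx]
    refine exists_congr fun z => and_congr_right fun _ => forall₂_congr fun y hy => ?_
    rw [h y hy]
  ext α
  constructor
  · intro hα
    obtain ⟨x, hx, rfl⟩ := hα.1
    exact Set.mem_image_of_mem f ((mem_iff x hx).mp hα)
  · rintro ⟨x, hx, rfl⟩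
    exact (mem_iff x hx.1).mpr hx

theorem one_le_sSup_poleComplexity {S : Set ℚ} (hS : S.Finite) (hx : x ∈ S) (hy : y ∈ S)
    (hne : y ≠ x) (h : northPole x ∈ disk y) : 1 ≤ sSup (poleComplexity S '' S) := by
  have hpos : 1 ≤ poleComplexity S x :=
    (Set.ncard_pos (hS.subset (Set.sep_subset S _))).mpr ⟨y, hy, hne, h⟩
  exact hpos.trans (le_csSup (hS.image _).bddAbove (Set.mem_image_of_mem _ hx))

end Essential

section UnitInterval

variable {T : Set ℚ} {x : ℚ}

theorem num_mem_Icc_of_mem_Icc (hx : x ∈ Set.Icc 0 1) : x.num ∈ Set.Icc 0 (x.den : ℤ) :=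
  ⟨Rat.num_nonneg.mpr hx.1, by simpa [Rat.le_iff] using hx.2⟩

theorem finite_setOf_mem_Icc_den_le (B : ℕ) : {x ∈ Set.Icc (0 : ℚ) 1 | x.den ≤ B}.Finite := by
  refine Set.Finite.of_finite_image (f := fun x => (x.num, x.den))
    (((Set.finite_Icc 0 (B : ℤ)).prod (Set.finite_Iic B)).subset ?_)
    fun x _ y _ h => Rat.ext (congrArg Prod.fst h) (congrArg Prod.snd h)
  rintro _ ⟨x, ⟨hx, hB⟩, rfl⟩
  obtain ⟨h0, h1⟩ := num_mem_Icc_of_mem_Icc hx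
  exact ⟨⟨h0, h1.trans (by exact_mod_cast hB)⟩, hB⟩

theorem eq_two_thirds_or_four_le_den (hT : T ⊆ Set.Icc 0 1) (h0 : 0 ∉ T) (h1 : 1 ∉ T)
    (h2 : 1 / 2 ∉ T) (h3 : 1 / 3 ∉ T) (hx : x ∈ T) : x = 2 / 3 ∨ 4 ≤ x.den := by
  by_contra! h
  obtain ⟨hne, hd⟩ := h
  obtain ⟨hk0, hk1⟩ := num_mem_Icc_of_mem_Icc (hT hx)
  have hpos := x.pos
  have hcop := x.reduced
  rw [← Rat.num_div_den x] at hx hne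
  generalize x.num = k at *
  generalize x.den = m at *
  interval_cases m <;> interval_cases k <;> simp_all

theorem eq_three_fourths_of_den_eq_four (hT : T ⊆ Set.Icc 0 1) (h4 : 1 / 4 ∉ T) (hx : x ∈ T)
    (hd : x.den = 4) : x = 3 / 4 := by
  by_contra hne
  obtain ⟨hk0, hk1⟩ := num_mem_Icc_of_mem_Icc (hT hx)
  have hcop := x.reduced
  rw [← Rat.num_div_den x] at hx hne
  rw [hd] at hx hne hcop hk1
  generalize x.num = k at *
  interval_cases k <;> first
    | exact absurd hcop (by decide)
    | simp_all

theorem two_thirds_mem_essential (hT : T ⊆ Set.Icc 0 1) (h0 : 0 ∉ T) (h1 : 1 ∉ T)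
    (h2 : 1 / 2 ∉ T) (h3 : 1 / 3 ∉ T) (h : 2 / 3 ∈ T) : 2 / 3 ∈ essential T := by
  refine mem_essential_iff.mpr ⟨h, northPole (2 / 3), northPole_mem_disk, fun y hy hne => ?_⟩
  have hd : (4 : ℝ) ≤ y.den := by
    exact_mod_cast (eq_two_thirds_or_four_le_den hT h0 h1 h2 h3 hy).resolve_left hne
  have him : (northPole (2 / 3)).im = 1 / 3 := by norm_num [northPole]
  rw [mem_disk_iff, him, not_le]
  nlinarith [sq_nonneg (y.den * (northPole (2 / 3)).re - y.num)]

theorem two_fifths_mem_essential (hT : T ⊆ Set.Icc 0 1) (h0 : 0 ∉ T) (h1 : 1 ∉ T)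
    (h2 : 1 / 2 ∉ T) (h3 : 1 / 3 ∉ T) (h4 : 1 / 4 ∉ T) (h : 2 / 5 ∈ T) :
    2 / 5 ∈ essential T := by
  -- The north pole of `2 / 5` lies in the disk of `2 / 3`; the Pythagorean triple `(5, 12, 13)`
  -- gives the point `2 / 5 + (-5 + 12 i) / 65` slightly to its left on the same circle.
  refine mem_essential_iff.mpr ⟨h, ⟨21 / 65, 12 / 65⟩, ?_, fun y hy hne => ?_⟩
  · rw [mem_disk_iff]
    norm_num
  · rw [mem_disk_iff, not_le]
    rcases eq_two_thirds_or_four_le_den hT h0 h1 h2 h3 hy with rfl | hd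
    · norm_num
    obtain hd4 | hd5 | hd6 : y.den = 4 ∨ y.den = 5 ∨ 6 ≤ y.den := by omega
    · rw [eq_three_fourths_of_den_eq_four hT h4 hy hd4]
      norm_num
    · have hnum : y.num ≠ 2 := fun hnum => hne (by rw [← Rat.num_div_den y, hnum, hd5]; norm_num)
      rw [hd5]
      rcases lt_or_gt_of_ne hnum with hlt | hgt
      · have : (y.num : ℝ) ≤ 1 := by exact_mod_cast Int.le_of_lt_add_one hlt
        norm_num
        nlinarith
      · have : (3 : ℝ) ≤ y.num := by exact_mod_cast hgt
        norm_num
        nlinarith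
    · have : (6 : ℝ) ≤ y.den := by exact_mod_cast hd6
      nlinarith [sq_nonneg ((y.den : ℝ) * (21 / 65) - y.num)]

end UnitInterval

section Rescale

/-- The affine map carrying `[0, 1]` to `[n/N, (n+1)/N]`, used both on `ℚ` and on `ℂ`. -/
def rescale {K : Type*} [Field K] (N n : ℕ) (x : K) : K := (n + x) / N

/-- The normalized candidates: the `k/m ∈ [0, 1]` in lowest terms for which `(n m + k) / (N m)` is
in lowest terms too, so that `candB N n` is the image of this set under `rescale N n`. -/
def admissible (N n : ℕ) : Set ℚ :=
  {x ∈ Set.Icc 0 1 | IsCoprime (n * x.den + x.num) (N : ℤ)}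

variable {N n : ℕ} {x : ℚ}

theorem admissible_subset_Icc : admissible N n ⊆ Set.Icc 0 1 := Set.sep_subset _ _

theorem div_mem_admissible {k m : ℤ} (hm : 0 < m) (hk : 0 ≤ k) (hkm : k ≤ m)
    (h : IsCoprime (n * m + k) (N : ℤ)) : (k / m : ℚ) ∈ admissible N n := by
  have hm' : (0 : ℚ) < m := by exact_mod_cast hm
  refine ⟨⟨by positivity, (div_le_one hm').mpr (by exact_mod_cast hkm)⟩, ?_⟩
  obtain ⟨g, hgk, hgm⟩ := Rat.exists_eq_mul_div_num_and_eq_mul_div_den k hm.ne'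
  refine IsCoprime.of_mul_left_right (x := g) ?_
  convert h using 1
  linear_combination -n * hgm - hgk

theorem natCast_div_mem_admissible_iff {k m : ℕ} (hm : 0 < m) (hkm : k ≤ m)
    (h : k.Coprime m) : (k / m : ℚ) ∈ admissible N n ↔ N.gcd (m * n + k) = 1 := by
  have hm' : (0 : ℤ) < m := by exact_mod_cast hm
  have hcast : (n * m + k : ℤ) = (m * n + k : ℕ) := by push_cast; ring
  rw [← Nat.coprime_iff_gcd_eq_one, Nat.coprime_comm, ← Nat.isCoprime_iff_coprime, ← hcast]
  refine ⟨fun hmem => ?_, fun hc => by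
    simpa using div_mem_admissible hm' k.cast_nonneg (by exact_mod_cast hkm) hc⟩
  have hden : (((k : ℚ) / m).den : ℤ) = m := by
    simpa using Rat.den_div_eq_of_coprime (a := k) hm' (by simpa using h)
  have hnum : ((k : ℚ) / m).num = k := by
    simpa using Rat.num_div_eq_of_coprime (a := k) hm' (by simpa using h)
  simpa only [hden, hnum] using hmem.2

variable [NeZero N]

theorem rescale_bijective (K : Type*) [Field K] [CharZero K] :
    (rescale N n : K → K).Bijective := by
  have hN : (N : K) ≠ 0 := NeZero.ne _
  refine Function.bijective_iff_has_inverse.mpr ⟨fun y => N * y - n, fun x => ?_, fun y => ?_⟩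
  · simp only [rescale]
    field_simp
    ring
  · simp only [rescale]
    field_simp
    ring

theorem den_rescale (hx : x ∈ admissible N n) : (rescale N n x).den = N * x.den := by
  have hN : (0 : ℤ) < N := by exact_mod_cast NeZero.pos N
  have hcop : IsCoprime (n * x.den + x.num) ((N * x.den : ℕ) : ℤ) := by
    rw [Nat.cast_mul, add_comm]
    exact (add_comm (_ : ℤ) _ ▸ hx.2).mul_right (x.isCoprime_num_den.add_mul_right_left _)
  have hfrac : rescale N n x = ((n * x.den + x.num : ℤ) : ℚ) / ((N * x.den : ℕ) : ℤ) := by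
    rw [rescale]
    push_cast
    rw [← Rat.den_mul_eq_num x]
    field_simp
  rw [hfrac]
  exact_mod_cast Rat.den_div_eq_of_coprime (by push_cast; positivity)
    (Int.isCoprime_iff_nat_coprime.mp hcop)

theorem candB_eq_image_rescale : candB N n = rescale N n '' admissible N n := by
  have hN : (0 : ℚ) < N := by exact_mod_cast NeZero.pos N
  ext α
  constructor
  · rintro ⟨h0, h1, c, hc⟩
    have hcpos : 0 < c := Nat.pos_of_mul_pos_left (hc ▸ α.pos)
    have hc' : (0 : ℚ) < c := by exact_mod_cast hcpos
    have hnum : (α.num : ℚ) = α * (N * c) := by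
      rw [← Rat.mul_den_eq_num α, hc, Nat.cast_mul]
    have hcop : IsCoprime α.num (N : ℤ) := by
      have := α.isCoprime_num_den
      rw [hc, Nat.cast_mul] at this
      exact this.of_mul_right_left
    rw [div_le_iff₀ hN] at h0
    rw [le_div_iff₀ hN] at h1
    refine ⟨((α.num - n * c : ℤ) : ℚ) / (c : ℤ), div_mem_admissible (by exact_mod_cast hcpos) ?_ ?_
      (by simpa using hcop), ?_⟩
    · rw [← Int.cast_nonneg_iff (R := ℚ)]
      push_cast
      nlinarith
    · rw [← Int.cast_le (R := ℚ)]
      push_cast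
      nlinarith
    · rw [rescale]
      push_cast
      rw [hnum]
      field_simp
      ring
  · rintro ⟨x, hx, rfl⟩
    refine ⟨?_, ?_, den_rescale hx ▸ dvd_mul_right _ _⟩
    · exact div_le_div_of_nonneg_right (le_add_of_nonneg_right hx.1.1) hN.le
    · exact div_le_div_of_nonneg_right (add_le_add_right hx.1.2 _) hN.le

theorem rescale_mem_disk_rescale_iff (hx : x ∈ admissible N n) (z : ℂ) :
    rescale N n z ∈ disk (rescale N n x) ↔ z ∈ disk x := by
  have hN : (0 : ℝ) < N := by exact_mod_cast NeZero.pos N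
  have hdiff : rescale N n z - (rescale N n x : ℚ) = (z - x) / N := by
    simp only [rescale]
    push_cast
    ring
  rw [disk, disk, Metric.mem_closedBall, Metric.mem_closedBall, Complex.dist_eq, Complex.dist_eq,
    hdiff, norm_div, Complex.norm_natCast, den_rescale hx, Nat.cast_mul, mul_comm (N : ℝ),
    ← div_div, div_le_div_iff_of_pos_right hN]

theorem northPole_rescale (hx : x ∈ admissible N n) :
    northPole (rescale N n x) = rescale N n (northPole x) := by
  rw [northPole, northPole, den_rescale hx, rescale, rescale]
  push_cast
  field_simp
  ring

theorem SB_eq_image_rescale : SB N n = rescale N n '' essential (admissible N n) := by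
  rw [← essential_image (rescale_bijective ℚ).injective (rescale_bijective ℂ).surjective
    fun _ hx => rescale_mem_disk_rescale_iff hx, ← candB_eq_image_rescale]
  rfl

end Rescale

section Finiteness

theorem exists_isCoprime_add_mul_s16 {a b : ℤ} (h : IsCoprime a b) (N : ℕ) [NeZero N] :
    ∃ t : ℤ, IsCoprime (a + t * b) N := by
  obtain rfl | hb := eq_or_ne b 0
  · exact ⟨0, by simpa using h.of_isCoprime_of_dvd_right (dvd_zero (N : ℤ))⟩
  have : NeZero (N * b.natAbs) := ⟨mul_ne_zero (NeZero.ne N) (Int.natAbs_ne_zero.mpr hb)⟩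
  have ha : IsUnit (a : ZMod b.natAbs) := by
    rw [ZMod.coe_int_isUnit_iff_isCoprime, Int.natCast_natAbs]
    exact h.symm.abs_left
  obtain ⟨u, hu⟩ := ZMod.unitsMap_surjective (dvd_mul_left b.natAbs N) ha.unit
  obtain ⟨c, hc⟩ := ZMod.intCast_surjective (u : ZMod (N * b.natAbs))
  have hcN : IsCoprime c N := by
    have hcop := (ZMod.coe_int_isUnit_iff_isCoprime c _).mp (hc ▸ u.isUnit)
    rw [Nat.cast_mul] at hcop
    exact hcop.of_mul_left_left.symm
  have hca : (a : ZMod b.natAbs) = c := by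
    rw [← ha.unit_spec, ← hu, ZMod.unitsMap_val, ← hc, ZMod.cast_intCast (dvd_mul_left _ N)]
  obtain ⟨t, ht⟩ : b ∣ c - a :=
    Int.natAbs_dvd.mp ((ZMod.intCast_eq_intCast_iff_dvd_sub a c b.natAbs).mp hca)
  exact ⟨t, by convert hcN using 1; linear_combination -ht⟩

theorem exists_isCoprime_and_mul_sub_mul_eq_one (N : ℕ) [NeZero N] (n : ℤ) {p q : ℤ}
    (hq : 1 < q) (h : IsCoprime p q) :
    ∃ d l : ℤ, 0 < d ∧ d ≤ q * N ∧ p * d - q * l = 1 ∧ IsCoprime (n * d + l) (N : ℤ) := by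
  have hqN : 0 < q * N := mul_pos (by linarith) (by exact_mod_cast NeZero.pos N)
  obtain ⟨a, b, hab⟩ := h
  obtain ⟨t, ht⟩ := exists_isCoprime_add_mul_s16
    (show IsCoprime (n * a - b) (n * q + p) from ⟨-q, a, by linear_combination hab⟩) N
  -- `(a + q t, -b + p t)` is a solution; reduce its first entry modulo `q N`.
  set s := (a + q * t) / (q * N)
  have hd : a + q * t - q * N * s = (a + q * t) % (q * N) := (Int.emod_def _ _).symm
  have hsol : p * (a + q * t - q * N * s) - q * (-b + p * t - p * N * s) = 1 := by
    linear_combination hab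
  refine ⟨a + q * t - q * N * s, -b + p * t - p * N * s, ?_,
    hd ▸ (Int.emod_lt_of_pos _ hqN).le, hsol, ?_⟩
  · refine (hd ▸ Int.emod_nonneg _ hqN.ne').lt_of_ne fun hzero => ?_
    rw [← hzero, mul_zero, zero_sub, ← mul_neg] at hsol
    exact hq.ne' (Int.eq_one_of_mul_eq_one_right (by linarith) hsol)
  · convert! ht.add_mul_left_left (-(n * q + p) * s) using 1
    ring

theorem exists_rat_abs_sub_le_and_one_lt_den_le {N Q : ℕ} (hN : 0 < N) (hNQ : N ≤ Q) {ξ : ℝ}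
    (hξ : ∀ p : ℤ, 1 / (N : ℝ) ≤ |ξ - p|) :
    ∃ r : ℚ, |ξ - r| ≤ 1 / ((Q + 1) * r.den) ∧ 1 < r.den ∧ r.den ≤ Q := by
  obtain ⟨r, hr, hrQ⟩ := Real.exists_rat_abs_sub_le_and_den_le ξ (hN.trans_le hNQ)
  refine ⟨r, hr, ?_, hrQ⟩
  by_contra! hle
  have hden : r.den = 1 := le_antisymm hle r.pos
  have hr' : (r : ℝ) = r.num := by exact_mod_cast ((Rat.den_eq_one_iff r).mp hden).symm
  rw [hden, hr', Nat.cast_one, mul_one] at hr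
  have hlt : 1 / (Q + 1 : ℝ) < 1 / N :=
    one_div_lt_one_div_of_lt (by exact_mod_cast hN) (by exact_mod_cast Nat.lt_succ_of_le hNQ)
  exact (hξ r.num).not_gt (hr.trans_lt hlt)

theorem exists_isCoprime_abs_mul_sub_le (N : ℕ) [NeZero N] (n : ℤ) {ξ : ℝ}
    (hξ : ∀ p : ℤ, 1 / (N : ℝ) ≤ |ξ - p|) :
    ∃ d l : ℤ, 0 < d ∧ d ≤ 4 * N ^ 2 ∧ IsCoprime (n * d + l) (N : ℤ) ∧ |d * ξ - l| ≤ 3 / 4 := by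
  obtain ⟨r, hr, hq, hrN⟩ := exists_rat_abs_sub_le_and_one_lt_den_le (NeZero.pos N)
    (Nat.le_mul_of_pos_left N four_pos) hξ
  push_cast at hr
  obtain ⟨d, l, hd, hdN, hdl, hcop⟩ := exists_isCoprime_and_mul_sub_mul_eq_one N n
    (by exact_mod_cast hq) r.isCoprime_num_den
  refine ⟨d, l, hd, ?_, hcop, ?_⟩
  · have hrN' : (r.den : ℤ) ≤ 4 * N := by exact_mod_cast hrN
    nlinarith [hrN']
  have hd' : (0 : ℝ) < d := by exact_mod_cast hd
  have hq' : (2 : ℝ) ≤ r.den := by exact_mod_cast hq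
  have hsplit : d * ξ - l = d * (ξ - r) + 1 / r.den := by
    have hdl' : (r.num * d - r.den * l : ℝ) = 1 := by exact_mod_cast hdl
    rw [Rat.cast_def r]
    field_simp
    linear_combination hdl'
  have hmain : d * |ξ - r| ≤ 1 / 4 := calc
    d * |ξ - r| ≤ (r.den * N) * (1 / ((4 * N + 1) * r.den)) := by
      gcongr
      exact_mod_cast hdN
    _ = N / (4 * N + 1) := by field_simp
    _ ≤ 1 / 4 := by
      rw [div_le_div_iff₀ (by positivity) four_pos]
      linarith
  calc |d * ξ - l| ≤ |d * (ξ - r)| + |1 / (r.den : ℝ)| := hsplit ▸ abs_add_le _ _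
    _ = d * |ξ - r| + 1 / r.den := by
      rw [abs_mul, abs_of_pos hd', abs_of_pos (by positivity : (0 : ℝ) < 1 / r.den)]
    _ ≤ 1 / 4 + 1 / 2 := add_le_add hmain (one_div_le_one_div_of_le two_pos hq')
    _ = 3 / 4 := by norm_num

variable {N n : ℕ} {x : ℚ}

theorem one_div_den_le_abs_sub_intCast {p : ℤ} (h : x ≠ p) : 1 / (x.den : ℚ) ≤ |x - p| := by
  have hd : (0 : ℚ) < x.den := by exact_mod_cast x.pos
  have hnum : x.num - p * x.den ≠ 0 := fun h0 => h <| by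
    rw [← Rat.num_div_den x, div_eq_iff hd.ne']
    exact_mod_cast sub_eq_zero.mp h0
  have hmul : |x - p| * x.den = |((x.num - p * x.den : ℤ) : ℚ)| := by
    push_cast
    rw [← Rat.mul_den_eq_num x, ← sub_mul, abs_mul, abs_of_pos hd]
  rw [div_le_iff₀ hd, hmul]
  exact_mod_cast Int.one_le_abs hnum

theorem notMem_essential_of_abs_mul_sub_add_le {k m : ℤ} (hx : x ∈ Set.Icc 0 1) (hm : 0 < m)
    (hlt : m < x.den) (hcop : IsCoprime (n * m + k) (N : ℤ))
    (h : |m * x - k| + m / x.den ≤ 1) : x ∉ essential (admissible N n) := by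
  have hm' : (0 : ℚ) < m := by exact_mod_cast hm
  have hd : (0 : ℚ) < x.den := by exact_mod_cast x.pos
  have hpos : (0 : ℚ) < m / x.den := div_pos hm' hd
  obtain ⟨hlo, hhi⟩ := abs_lt.mp (show |m * x - k| < 1 by linarith)
  have hk : 0 ≤ k := by
    have : (-1 : ℚ) < k := by nlinarith [hx.1]
    exact Int.add_one_le_of_lt (by exact_mod_cast this)
  have hkm : k ≤ m := by
    have : (k : ℚ) < m + 1 := by nlinarith [hx.2]
    exact Int.le_of_lt_add_one (by exact_mod_cast this)
  have hden : (((k : ℚ) / m).den : ℤ) ≤ m :=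
    Int.le_of_dvd hm (by simpa [Rat.divInt_eq_div] using Rat.den_dvd k m)
  refine notMem_essential_of_disk_subset (div_mem_admissible hm hk hkm hcop)
    (fun heq => ?_) (disk_subset_disk_s16 ?_)
  · rw [heq] at hden
    exact hden.not_gt hlt
  · calc |x - k / m| + 1 / x.den = (|m * x - k| + m / x.den) / m := by
          rw [show x - k / m = (m * x - k) / m by field_simp, abs_div, abs_of_pos hm']
          field_simp
      _ ≤ 1 / m := by gcongr
      _ ≤ 1 / (((k : ℚ) / m).den : ℚ) :=
          one_div_le_one_div_of_le (by positivity) (by exact_mod_cast hden)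

variable [NeZero N]

theorem exists_isCoprime_abs_mul_sub_add_le {p : ℤ} (hp : |x - p| < 1 / N) (hx : 1 < x.den) :
    ∃ k : ℤ, IsCoprime (n * N + k) (N : ℤ) ∧ |N * x - k| + N / x.den ≤ 1 := by
  have hN : (0 : ℚ) < N := by exact_mod_cast NeZero.pos N
  have hden : 1 / (x.den : ℚ) ≤ |x - p| :=
    one_div_den_le_abs_sub_intCast (by rintro rfl; simp at hx)
  rw [lt_div_iff₀' hN] at hp
  have hden' : N / (x.den : ℚ) ≤ N * |x - p| := by
    rw [div_eq_mul_one_div]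
    gcongr
  obtain ⟨ε, hε, hεx⟩ : ∃ ε : ℤ, (ε = 1 ∨ ε = -1) ∧ |x - p| = ε * (x - p) := by
    rcases abs_choice (x - p) with h | h
    · exact ⟨1, .inl rfl, by simp [h]⟩
    · exact ⟨-1, .inr rfl, by simp [h]⟩
  have hεsq : ε * ε = 1 := by rcases hε with rfl | rfl <;> rfl
  have hεabs : |(ε : ℚ)| = 1 := by rcases hε with rfl | rfl <;> simp
  refine ⟨p * N + ε, ⟨ε, -ε * (n + p), by linear_combination hεsq⟩, ?_⟩
  have hfactor : N * x - (p * N + ε : ℤ) = ε * (N * |x - p| - 1) := by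
    have hεsq' : (ε * ε : ℚ) = 1 := by exact_mod_cast hεsq
    rw [hεx]
    push_cast
    linear_combination -(N * (x - p)) * hεsq'
  rw [hfactor, abs_mul, hεabs, one_mul, abs_of_neg (by linarith)]
  linarith

theorem den_le_of_mem_essential (hx : x ∈ essential (admissible N n)) :
    x.den ≤ 16 * N ^ 2 := by
  by_contra! hbig
  have hxI := admissible_subset_Icc hx.1
  have hN : 1 ≤ N := NeZero.one_le
  have hNd : N < x.den := by nlinarith
  have hd : (0 : ℚ) < x.den := by exact_mod_cast x.pos
  by_cases hfar : ∀ p : ℤ, 1 / (N : ℝ) ≤ |(x : ℝ) - p|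
  · obtain ⟨d, l, hd0, hdN, hcop, hdl⟩ := exists_isCoprime_abs_mul_sub_le N n hfar
    have hdx : 4 * d ≤ x.den := by
      have : (16 * N ^ 2 : ℤ) < x.den := by exact_mod_cast hbig
      linarith
    have hquarter : (d : ℚ) / x.den ≤ 1 / 4 := by
      rw [div_le_div_iff₀ hd four_pos]
      exact_mod_cast (by linarith [hdx] : d * 4 ≤ 1 * (x.den : ℤ))
    have hdl' : |d * x - l| ≤ 3 / 4 := by
      rw [← Rat.cast_le (K := ℝ)]
      push_cast
      exact hdl
    exact notMem_essential_of_abs_mul_sub_add_le hxI hd0 (by linarith [hdx]) hcop (by linarith) hx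
  · push Not at hfar
    obtain ⟨p, hp⟩ := hfar
    have hp' : |x - p| < 1 / N := by
      rw [← Rat.cast_lt (K := ℝ)]
      push_cast
      exact hp
    obtain ⟨k, hcop, hk⟩ := exists_isCoprime_abs_mul_sub_add_le (n := n) hp' (hN.trans_lt hNd)
    exact notMem_essential_of_abs_mul_sub_add_le hxI (m := N) (by exact_mod_cast hN)
      (by exact_mod_cast hNd) hcop (by simpa using hk) hx

theorem finite_essential_admissible : (essential (admissible N n)).Finite :=
  (finite_setOf_mem_Icc_den_le (16 * N ^ 2)).subset fun _ hx =>
    ⟨admissible_subset_Icc hx.1, den_le_of_mem_essential hx⟩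

end Finiteness

/-- For a pair `(N,n)` such that each of `n`, `n+1`, `2n+1`, `3n+1`, `4n+1` has a
common factor `> 1` with `N` while `gcd(N,3n+2) = gcd(N,5n+2) = 1`, we have
`c(N,n) ≥ 1`. -/
theorem cB_pos (N n : ℕ) (hN : 1 < N) (hn : n ≤ N - 1)
    (hg : 1 < Nat.gcd N n) (h1 : 1 < Nat.gcd N (n + 1))
    (h2 : 1 < Nat.gcd N (2 * n + 1)) (h31 : 1 < Nat.gcd N (3 * n + 1))
    (h41 : 1 < Nat.gcd N (4 * n + 1))
    (h32 : Nat.gcd N (3 * n + 2) = 1) (h52 : Nat.gcd N (5 * n + 2) = 1) :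
    1 ≤ cB N n := by
  have : NeZero N := ⟨by omega⟩
  have hT : admissible N n ⊆ Set.Icc 0 1 := admissible_subset_Icc
  have mem_iff (k m : ℕ) (hm : 0 < m) (hkm : k ≤ m) (h : k.Coprime m) :=
    natCast_div_mem_admissible_iff (N := N) (n := n) hm hkm h
  have h0 : 0 ∉ admissible N n := by simpa [hg.ne'] using mem_iff 0 1
  have h1' : 1 ∉ admissible N n := by simpa [h1.ne'] using mem_iff 1 1
  have h12 : 1 / 2 ∉ admissible N n := by simpa [h2.ne'] using mem_iff 1 2
  have h13 : 1 / 3 ∉ admissible N n := by simpa [h31.ne'] using mem_iff 1 3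
  have h14 : 1 / 4 ∉ admissible N n := by simpa [h41.ne'] using mem_iff 1 4
  have h23 : 2 / 3 ∈ essential (admissible N n) :=
    two_thirds_mem_essential hT h0 h1' h12 h13
      ((mem_iff 2 3 (by simp) (by simp) (by norm_num)).mpr h32)
  have h25 : 2 / 5 ∈ essential (admissible N n) :=
    two_fifths_mem_essential hT h0 h1' h12 h13 h14
      ((mem_iff 2 5 (by simp) (by simp) (by norm_num)).mpr h52)
  have hpole : northPole (2 / 5) ∈ disk (2 / 3) := by
    rw [mem_disk_iff]
    norm_num [northPole]
  rw [cB, SB_eq_image_rescale]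
  refine one_le_sSup_poleComplexity (finite_essential_admissible.image _)
    (Set.mem_image_of_mem _ h25) (Set.mem_image_of_mem _ h23)
    ((rescale_bijective ℚ).injective.ne (by norm_num)) ?_
  rwa [northPole_rescale h25.1, rescale_mem_disk_rescale_iff h23.1]

end

end Paper
end
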